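/- Let p be an odd prime and n a positive integer. Let γ, g ∈ GL_n(ℚ_p) and suppose γ is topologically unipotent, i.e., γ^(p^k) → 1 as k → ∞. Set δ = g⁻¹γg and suppose that every entry of δ and every entry of δ⁻¹ has p-adic norm at most 1 (so that δ ∈ GL_n(ℤ_p)). Then the reduction of δ modulo p, i.e., the matrix over 𝔽_p = ℤ/pℤ obtained by applying the residue map ℤ_p → ℤ/pℤ to each entry of δ, is unipotent: (δ̄ − 1) is nilpotent. -/

import Mathlib

open Filter

/-- Lemma 3(2): if `γ ∈ GL_n(ℚ_p)` is topologically unipotent and the conjugate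
`δ = g⁻¹γg` has all entries (and all entries of `δ⁻¹`) of norm at most `1`, then
the reduction of `δ` mod `p` is unipotent. -/
theorem reduction_of_integral_conjugate_unipotent
    (p : ℕ) [Fact p.Prime] (hp : p ≠ 2) (n : ℕ) (hn : 0 < n)
    (γ g : GL (Fin n) ℚ_[p])
    (hγ : Tendsto (fun k : ℕ => (γ : Matrix (Fin n) (Fin n) ℚ_[p]) ^ (p ^ k))
      atTop (nhds 1))
    (hδ : ∀ i j, ‖((g⁻¹ * γ * g : GL (Fin n) ℚ_[p]) : Matrix (Fin n) (Fin n) ℚ_[p]) i j‖ ≤ 1)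
    (hδinv : ∀ i j,
      ‖(((g⁻¹ * γ * g)⁻¹ : GL (Fin n) ℚ_[p]) : Matrix (Fin n) (Fin n) ℚ_[p]) i j‖ ≤ 1) :
    ∃ D : Matrix (Fin n) (Fin n) ℤ_[p],
      (∀ i j, (D i j : ℚ_[p]) =
        ((g⁻¹ * γ * g : GL (Fin n) ℚ_[p]) : Matrix (Fin n) (Fin n) ℚ_[p]) i j) ∧
      IsNilpotent (D.map (PadicInt.toZMod) - 1) := by
  haveI : Nonempty (Fin n) := ⟨⟨0, hn⟩⟩
  set δ : GL (Fin n) ℚ_[p] := g⁻¹ * γ * g with hδdef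
  let D : Matrix (Fin n) (Fin n) ℤ_[p] := fun i j => ⟨(δ : Matrix (Fin n) (Fin n) ℚ_[p]) i j, hδ i j⟩
  have hD : (PadicInt.Coe.ringHom (p := p)).mapMatrix D = (δ : Matrix (Fin n) (Fin n) ℚ_[p]) := by
    ext i j
    rfl
  refine ⟨D, fun i j => rfl, ?_⟩
  have hpow : ∀ m : ℕ, (δ : Matrix (Fin n) (Fin n) ℚ_[p]) ^ m
      = ((g⁻¹ : GL (Fin n) ℚ_[p]) : Matrix (Fin n) (Fin n) ℚ_[p])
        * (γ : Matrix (Fin n) (Fin n) ℚ_[p]) ^ m * (g : Matrix (Fin n) (Fin n) ℚ_[p]) := by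
    intro m
    have h : δ ^ m = g⁻¹ * γ ^ m * g := by
      have := conj_pow (i := m) (a := g⁻¹) (b := γ)
      simpa [hδdef] using this
    have h2 := congrArg (fun u : GL (Fin n) ℚ_[p] => (u : Matrix (Fin n) (Fin n) ℚ_[p])) h
    simpa only [Units.val_mul, Units.val_pow_eq_pow_val] using h2
  have hlim : Tendsto (fun k : ℕ => (δ : Matrix (Fin n) (Fin n) ℚ_[p]) ^ (p ^ k))
      atTop (nhds 1) := by
    simp only [hpow]
    have h1 := (hγ.const_mul ((g⁻¹ : GL (Fin n) ℚ_[p]) : Matrix (Fin n) (Fin n) ℚ_[p])).mul_const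
      (g : Matrix (Fin n) (Fin n) ℚ_[p])
    have h3 : ((g⁻¹ : GL (Fin n) ℚ_[p]) : Matrix (Fin n) (Fin n) ℚ_[p]) * 1
        * (g : Matrix (Fin n) (Fin n) ℚ_[p]) = 1 := by
      rw [mul_one]
      exact Units.inv_mul g
    rwa [h3] at h1
  have hev : ∀ᶠ k : ℕ in atTop, ∀ i j,
      ‖((δ : Matrix (Fin n) (Fin n) ℚ_[p]) ^ (p ^ k)) i j
        - (1 : Matrix (Fin n) (Fin n) ℚ_[p]) i j‖ < 1 := by
    rw [eventually_all]
    intro i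
    rw [eventually_all]
    intro j
    have h := tendsto_pi_nhds.1 (tendsto_pi_nhds.1 hlim i) j
    have h' := Metric.tendsto_nhds.1 h 1 one_pos
    simpa only [dist_eq_norm] using h'
  obtain ⟨k, hk⟩ := hev.exists
  refine ⟨p ^ k, ?_⟩
  rw [sub_pow_char_pow_of_commute p k (Commute.one_right _), one_pow]
  have hmap : D.map (PadicInt.toZMod (p := p)) = (PadicInt.toZMod (p := p)).mapMatrix D := rfl
  rw [hmap, ← map_pow, ← map_one (PadicInt.toZMod (p := p)).mapMatrix, ← map_sub]
  ext i j
  change PadicInt.toZMod ((D ^ p ^ k - 1) i j) = 0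
  rw [← RingHom.mem_ker, PadicInt.ker_toZMod, IsLocalRing.mem_maximalIdeal,
    PadicInt.mem_nonunits, PadicInt.norm_def]
  have h := hk i j
  rw [← hD, ← map_pow, ← map_one (PadicInt.Coe.ringHom (p := p)).mapMatrix,
    ← Matrix.sub_apply, ← map_sub] at h
  exact h
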